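/- The set A is a nonempty open subset of ℝ² with (0,0) in its boundary (i.e., (0,0) ∈ closure(A) \ A), and for every (z,w) ∈ A the orbit (z_n, w_n) = f^n(z,w) converges to the real line {z = w}, that is, z_n − w_n → 0 as n → ∞. -/

import Mathlib

open Filter Topology

/-- The restriction of the map `f(z,w) = (z(1-(z-w)), w(1+(z-w)))` to `ℝ² ⊂ ℂ²`
(`f` maps `ℝ²` into `ℝ²`). -/
noncomputable def fR : ℝ × ℝ → ℝ × ℝ :=
  fun p => (p.1 * (1 - (p.1 - p.2)), p.2 * (1 + (p.1 - p.2)))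

/-- The triangle `A = {(z,w) ∈ ℝ² : z > 0, w > 0, z + w < 1}`. -/
def A : Set (ℝ × ℝ) := {p : ℝ × ℝ | 0 < p.1 ∧ 0 < p.2 ∧ p.1 + p.2 < 1}

/-!
The coordinate sum is a Lyapunov function for `fR`: each step lowers it by exactly `(z - w) ^ 2`,
while on the invariant triangle `A` it stays positive. A sequence bounded below cannot keep
dropping by a definite amount, so `(z_n - w_n) ^ 2 → 0`.
-/

theorem tendsto_zero_of_succ_add_le {α : Type*} [AddCommGroup α]
    [ConditionallyCompleteLinearOrder α] [IsOrderedAddMonoid α] [TopologicalSpace α]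
    [OrderTopology α] {s d : ℕ → α} (hs : BddBelow (Set.range s)) (hd : ∀ n, 0 ≤ d n)
    (hsd : ∀ n, s (n + 1) + d n ≤ s n) : Tendsto d atTop (𝓝 0) := by
  have hanti : Antitone s := antitone_nat_of_succ_le fun n =>
    (le_add_of_nonneg_right (hd n)).trans (hsd n)
  have hlim : Tendsto s atTop (𝓝 (⨅ n, s n)) := tendsto_atTop_ciInf hanti hs
  have hdrop : Tendsto (fun n => s n - s (n + 1)) atTop (𝓝 0) := by
    simpa only [sub_self] using hlim.sub ((tendsto_add_atTop_iff_nat 1).2 hlim)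
  exact tendsto_of_tendsto_of_tendsto_of_le_of_le tendsto_const_nhds hdrop hd
    fun n => le_sub_iff_add_le'.2 (hsd n)

theorem tendsto_zero_of_tendsto_pow_zero {ι R : Type*} [NormedRing R] [NormMulClass R]
    [NormOneClass R] {l : Filter ι} {u : ι → R} {k : ℕ} (hk : k ≠ 0)
    (hu : Tendsto (fun i => u i ^ k) l (𝓝 0)) :
    Tendsto u l (𝓝 0) := by
  rw [← Asymptotics.isLittleO_one_iff ℝ] at hu ⊢
  exact .of_pow (n := k) (by simpa only [Pi.pow_def, one_pow] using hu) hk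

theorem fst_add_snd_fR (p : ℝ × ℝ) :
    (fR p).1 + (fR p).2 = p.1 + p.2 - (p.1 - p.2) ^ 2 := by
  simp only [fR]
  ring

theorem tendsto_fst_sub_snd_iterate_fR {p : ℝ × ℝ}
    (hp : BddBelow (Set.range fun n => (fR^[n] p).1 + (fR^[n] p).2)) :
    Tendsto (fun n => (fR^[n] p).1 - (fR^[n] p).2) atTop (𝓝 0) := by
  refine tendsto_zero_of_tendsto_pow_zero two_ne_zero
    (tendsto_zero_of_succ_add_le hp (fun n => sq_nonneg _) fun n => ?_)
  rw [Function.iterate_succ_apply', fst_add_snd_fR, sub_add_cancel]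

theorem mapsTo_fR_A : Set.MapsTo fR A A := by
  rintro p ⟨hz, hw, hsum⟩
  refine ⟨mul_pos hz (by linarith), mul_pos hw (by linarith), ?_⟩
  calc (fR p).1 + (fR p).2 = p.1 + p.2 - (p.1 - p.2) ^ 2 := fst_add_snd_fR p
    _ ≤ p.1 + p.2 := sub_le_self _ (sq_nonneg _)
    _ < 1 := hsum

theorem bddBelow_range_fst_add_snd_iterate_fR {p : ℝ × ℝ} (hp : p ∈ A) :
    BddBelow (Set.range fun n => (fR^[n] p).1 + (fR^[n] p).2) := by
  refine ⟨0, Set.forall_mem_range.2 fun n => ?_⟩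
  obtain ⟨hz, hw, -⟩ := mapsTo_fR_A.iterate n hp
  exact (add_pos hz hw).le

theorem isOpen_A : IsOpen A :=
  (isOpen_lt continuous_const continuous_fst).inter
    ((isOpen_lt continuous_const continuous_snd).inter
      (isOpen_lt (continuous_fst.add continuous_snd) continuous_const))

theorem zero_notMem_A : ((0, 0) : ℝ × ℝ) ∉ A := fun h => lt_irrefl _ h.1

theorem zero_mem_closure_A : ((0, 0) : ℝ × ℝ) ∈ closure A := by
  have hdiag : Set.MapsTo (fun t : ℝ => (t, t)) (Set.Ioo 0 (1 / 2)) A :=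
    fun t ht => ⟨ht.1, ht.1, by linarith [ht.2]⟩
  have hzero : (0 : ℝ) ∈ closure (Set.Ioo 0 (1 / 2)) := by
    rw [closure_Ioo (by norm_num)]
    exact Set.left_mem_Icc.2 (by norm_num)
  exact map_mem_closure (f := fun t : ℝ => (t, t)) (by fun_prop) hzero hdiag

/-- `A` is a nonempty open set with the origin in its boundary, and every orbit starting in `A`
converges to the line `{z = w}`, i.e. `z_n - w_n → 0`. -/
theorem A_attracted_to_diagonal :
    A.Nonempty ∧ IsOpen A ∧ ((0, 0) : ℝ × ℝ) ∈ closure A \ A ∧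
    ∀ p ∈ A, Tendsto (fun n => (fR^[n] p).1 - (fR^[n] p).2) atTop (𝓝 0) :=
  ⟨closure_nonempty_iff.1 ⟨_, zero_mem_closure_A⟩, isOpen_A, ⟨zero_mem_closure_A, zero_notMem_A⟩,
    fun _ hp => tendsto_fst_sub_snd_iterate_fR (bddBelow_range_fst_add_snd_iterate_fR hp)⟩
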